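/- arXiv:1005.2553 — 3 statements merged into one kernel-verified Lean document; each statement's English description precedes it below -/
import Mathlib

section
/- Let n > 1 and let r = (r_1, …, r_n) ∈ ℕ^n satisfy r_1 + 2r_2 + ⋯ + n·r_n = n and |r| := r_1 + ⋯ + r_n < n. Let ℬ(r) be the (finite) set of words of length n − 1 lying in ℬ which contain exactly n − |r| − 1 occurrences of the letter 0 and exactly r_i occurrences of the letter i for each 1 ≤ i ≤ n. Then the cardinality N of ℬ(r) satisfies N · (n − |r| − 1)! · r_1! r_2! ⋯ r_n! = (n − 2)!; equivalently, N = (1/(n−1)) · multinomial(n−1; n−|r|−1, r_1, …, r_n). -/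
/-- The weight of a word: the sum of `(a - 1)` over its letters, as an integer. -/
def wt (w : List ℕ) : ℤ := (w.map (fun a => (a : ℤ) - 1)).sum

/-- The set `ℬ` of words of weight 1 all of whose nonempty prefixes have positive weight. -/
def Bset : Set (List ℕ) :=
  {w | wt w = 1 ∧ ∀ j, 0 < j → j ≤ w.length → 0 < wt (w.take j)}

/-!
Raney's cycle lemma: if the entries of a list of integers add up to `1`, then exactly one of its
rotations has only positive nonempty prefix sums, namely the one starting at the last position where
the prefix sum is minimal. Hence among the arrangements of a multiset of `m` letters of total weight
`1` exactly one in `m` lies in `ℬ`, and the arrangements are counted by a multinomial coefficient.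
-/

open Finset
open scoped Nat

section PrefixSums

variable {G : Type*} [AddCommGroup G]

theorem sum_take_rotate_of_add_le {l : List G} {k j : ℕ} (h : k + j ≤ l.length) :
    ((l.rotate k).take j).sum = (l.take (k + j)).sum - (l.take k).sum := by
  rw [List.rotate_eq_drop_append_take (by lia),
    List.take_append_of_le_length (by rw [List.length_drop]; lia), List.take_add, List.sum_append,
    add_sub_cancel_left]

theorem sum_take_rotate_of_le_add {l : List G} {k j : ℕ} (hk : k ≤ l.length) (hj : j ≤ l.length)
    (h : l.length ≤ k + j) :
    ((l.rotate k).take j).sum = l.sum + (l.take (k + j - l.length)).sum - (l.take k).sum := by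
  have hmin : min (j - (l.length - k)) k = k + j - l.length := by lia
  rw [List.rotate_eq_drop_append_take hk, List.take_append,
    List.take_of_length_le (by rw [List.length_drop]; lia), List.length_drop, List.take_take, hmin,
    List.sum_append, ← List.sum_take_add_sum_drop l k]
  abel

end PrefixSums

/-- A list stays positive if all its nonempty prefixes have positive sum. This is the condition on
the weights `a - 1` of the letters of a word that defines `ℬ`. -/
def StaysPositive {G : Type*} [AddMonoid G] [LT G] (l : List G) : Prop :=
  ∀ j, 0 < j → j ≤ l.length → 0 < (l.take j).sum

section CycleLemma

theorem exists_last_argmin_lt {α : Type*} [LinearOrder α] (f : ℕ → α) {n : ℕ} (hn : n ≠ 0) :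
    ∃ k < n, (∀ i < n, f k ≤ f i) ∧ ∀ i < n, k < i → f k < f i := by
  obtain ⟨k, hk, hmin⟩ := exists_min_image (range n) (fun i ↦ toLex (f i, OrderDual.toDual i))
    (nonempty_range_iff.mpr hn)
  simp only [mem_range, Prod.Lex.toLex_le_toLex, OrderDual.toDual_le_toDual] at hk hmin
  refine ⟨k, hk, fun i hi ↦ ?_, fun i hi hki ↦ ?_⟩
  · exact (hmin i hi).elim le_of_lt fun h ↦ h.1.le
  · exact (hmin i hi).resolve_right fun h ↦ hki.not_ge h.2

theorem exists_staysPositive_rotate {G : Type*} [AddCommGroup G] [LinearOrder G]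
    [IsOrderedAddMonoid G] {l : List G} (hl : 0 < l.sum) :
    ∃ k < l.length, StaysPositive (l.rotate k) := by
  have hne : l.length ≠ 0 := by
    rw [Ne, List.length_eq_zero_iff]
    rintro rfl
    simp at hl
  obtain ⟨k, hk, hmin, hlast⟩ := exists_last_argmin_lt (fun i ↦ (l.take i).sum) hne
  refine ⟨k, hk, fun j hj₀ hj ↦ ?_⟩
  rw [List.length_rotate] at hj
  rcases lt_or_ge (k + j) l.length with h | h
  · rw [sum_take_rotate_of_add_le h.le]
    exact sub_pos.mpr (hlast _ h (by lia))
  · rw [sum_take_rotate_of_le_add hk.le hj h, add_sub_assoc]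
    exact add_pos_of_pos_of_nonneg hl (sub_nonneg.mpr (hmin _ (by lia)))

/-- The prefix of `l.rotate k` that ends at position `k'` and the prefix of `l.rotate k'` that ends
at position `k` together exhaust `l`, so their sums cannot both be positive integers. -/
theorem le_of_staysPositive_rotate {l : List ℤ} (hl : l.sum ≤ 1) {k k' : ℕ} (hk' : k' < l.length)
    (hpos : StaysPositive (l.rotate k)) (hpos' : StaysPositive (l.rotate k')) : k' ≤ k := by
  by_contra! hlt
  have h := hpos (k' - k) (by lia) (by rw [List.length_rotate]; lia)
  have h' := hpos' (l.length - (k' - k)) (by lia) (by rw [List.length_rotate]; lia)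
  rw [sum_take_rotate_of_add_le (by lia), show k + (k' - k) = k' by lia] at h
  rw [sum_take_rotate_of_le_add hk'.le (by lia) (by lia),
    show k' + (l.length - (k' - k)) - l.length = k by lia] at h'
  lia

theorem existsUnique_staysPositive_rotate {l : List ℤ} (hl : l.sum = 1) :
    ∃! k, k < l.length ∧ StaysPositive (l.rotate k) := by
  obtain ⟨k, hk, hpos⟩ := exists_staysPositive_rotate (hl ▸ zero_lt_one)
  refine ⟨k, ⟨hk, hpos⟩, fun k' ⟨hk', hpos'⟩ ↦ le_antisymm ?_ ?_⟩
  · exact le_of_staysPositive_rotate hl.le hk' hpos hpos'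
  · exact le_of_staysPositive_rotate hl.le hk hpos' hpos

end CycleLemma

section Arrangements

variable {α : Type*} [DecidableEq α]

/-- The arrangements of a multiset `M`: the words in which every letter occurs as often as in `M`,
each listed once (`Multiset.lists` repeats them). -/
def arrangements (M : Multiset α) : Finset (List α) := M.lists.toFinset

theorem mem_arrangements {M : Multiset α} {w : List α} :
    w ∈ arrangements M ↔ (w : Multiset α) = M := by
  rw [arrangements, Multiset.mem_toFinset, Multiset.mem_lists_iff, eq_comm]
  rfl

theorem arrangements_zero : arrangements (0 : Multiset α) = {[]} := by
  ext w
  rw [mem_arrangements, Multiset.coe_eq_zero, mem_singleton]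

theorem arrangements_eq_biUnion_cons {M : Multiset α} (hM : M ≠ 0) :
    arrangements M = M.toFinset.biUnion fun a ↦ (arrangements (M.erase a)).image (List.cons a) := by
  ext w
  simp only [mem_biUnion, mem_image, Multiset.mem_toFinset, mem_arrangements]
  constructor
  · rintro rfl
    cases w with
    | nil => exact absurd rfl hM
    | cons a v => exact ⟨a, by simp, v, by simp, rfl⟩
  · rintro ⟨a, ha, v, hv, rfl⟩
    rw [← Multiset.cons_coe, hv, Multiset.cons_erase ha]

theorem card_arrangements_eq_sum_erase {M : Multiset α} (hM : M ≠ 0) :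
    #(arrangements M) = ∑ a ∈ M.toFinset, #(arrangements (M.erase a)) := by
  rw [arrangements_eq_biUnion_cons hM, card_biUnion]
  · exact sum_congr rfl fun a _ ↦ card_image_of_injective _ List.cons_injective
  · intro a _ b _ hab
    rw [Function.onFun, disjoint_left]
    simp only [mem_image]
    rintro _ ⟨v, _, rfl⟩ ⟨v', _, h⟩
    exact hab (List.cons.inj h).1.symm

theorem prod_factorial_count_eq_count_mul {M : Multiset α} {S : Finset α} {a : α} (haM : a ∈ M)
    (haS : a ∈ S) :
    ∏ b ∈ S, (M.count b)! = M.count a * ∏ b ∈ S, ((M.erase a).count b)! := by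
  have hrest : ∏ b ∈ S.erase a, ((M.erase a).count b)! = ∏ b ∈ S.erase a, (M.count b)! :=
    prod_congr rfl fun b hb ↦ by rw [Multiset.count_erase_of_ne (ne_of_mem_erase hb)]
  rw [← mul_prod_erase S _ haS, ← mul_prod_erase S _ haS, hrest, Multiset.count_erase_self,
    ← mul_assoc, Nat.mul_factorial_pred (Multiset.count_ne_zero.mpr haM)]

theorem card_arrangements_mul_prod_factorial {S : Finset α} (M : Multiset α)
    (hS : M.toFinset ⊆ S) :
    #(arrangements M) * ∏ a ∈ S, (M.count a)! = M.card ! := by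
  induction M using Multiset.strongInductionOn with
  | ih M ih =>
    rcases eq_or_ne M 0 with rfl | hM
    · simp [arrangements_zero]
    have hterm : ∀ a ∈ M.toFinset, #(arrangements (M.erase a)) * ∏ b ∈ S, (M.count b)! =
        M.count a * (M.card - 1)! := by
      intro a ha
      have haM : a ∈ M := Multiset.mem_toFinset.mp ha
      have hsub : (M.erase a).toFinset ⊆ S :=
        (Multiset.toFinset_subset.mpr (Multiset.erase_subset a M)).trans hS
      rw [prod_factorial_count_eq_count_mul haM (hS ha), mul_left_comm,
        ih _ (Multiset.erase_lt.mpr haM) hsub, Multiset.card_erase_of_mem haM, Nat.pred_eq_sub_one]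
    rw [card_arrangements_eq_sum_erase hM, sum_mul, sum_congr rfl hterm, ← sum_mul,
      Multiset.toFinset_sum_count_eq, Nat.mul_factorial_pred (Multiset.card_eq_zero.not.mpr hM)]

theorem image_rotate_arrangements (M : Multiset α) (k : ℕ) :
    (arrangements M).image (List.rotate · k) = arrangements M := by
  refine eq_of_subset_of_card_le (image_subset_iff.mpr fun w hw ↦ ?_)
    (card_image_of_injective _ (List.rotate_injective k)).ge
  rw [mem_arrangements] at hw ⊢
  rw [← hw, Multiset.coe_eq_coe]
  exact List.rotate_perm w k

theorem card_filter_rotate_arrangements (M : Multiset α) (P : List α → Prop) [DecidablePred P]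
    (k : ℕ) : #{w ∈ arrangements M | P (w.rotate k)} = #{w ∈ arrangements M | P w} := by
  conv_rhs => rw [← image_rotate_arrangements M k, filter_image]
  exact (card_image_of_injective _ (List.rotate_injective k)).symm

theorem card_arrangements_of_existsUnique_rotate {M : Multiset α} {P : List α → Prop}
    [DecidablePred P] (h : ∀ w ∈ arrangements M, ∃! k, k < w.length ∧ P (w.rotate k)) :
    #(arrangements M) = M.card * #{w ∈ arrangements M | P w} := by
  have hone : ∀ w ∈ arrangements M, #{k ∈ range M.card | P (w.rotate k)} = 1 := by
    intro w hw
    obtain ⟨k, hk, huniq⟩ := h w hw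
    have hlen : w.length = M.card := by rw [← mem_arrangements.mp hw, Multiset.coe_card]
    simp only [hlen] at hk huniq
    rw [card_eq_one]
    refine ⟨k, ext fun i ↦ ?_⟩
    rw [mem_filter, mem_range, mem_singleton]
    exact ⟨huniq i, fun hi ↦ hi ▸ hk⟩
  have hcount := card_mul_eq_card_mul (fun (w : List α) (k : ℕ) ↦ P (w.rotate k)) hone
    fun k (_ : k ∈ range M.card) ↦ card_filter_rotate_arrangements M P k
  rwa [mul_one, card_range] at hcount

open Classical in
theorem card_filter_staysPositive_mul_prod_factorial {M : Multiset α} {f : α → ℤ}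
    (hM : (M.map f).sum = 1) {S : Finset α} (hS : M.toFinset ⊆ S) :
    #{w ∈ arrangements M | StaysPositive (w.map f)} * ∏ a ∈ S, (M.count a)! = (M.card - 1)! := by
  have hcard : M.card ≠ 0 := by
    rw [Ne, Multiset.card_eq_zero]
    rintro rfl
    simp at hM
  have hrot : ∀ w ∈ arrangements M, ∃! k, k < w.length ∧ StaysPositive ((w.rotate k).map f) := by
    intro w hw
    have hsum : (w.map f).sum = 1 := by
      rw [← hM, ← mem_arrangements.mp hw, Multiset.map_coe, Multiset.sum_coe]
    simpa only [List.map_rotate, List.length_map] using existsUnique_staysPositive_rotate hsum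
  apply Nat.eq_of_mul_eq_mul_left (Nat.pos_of_ne_zero hcard)
  rw [← mul_assoc, ← card_arrangements_of_existsUnique_rotate hrot,
    card_arrangements_mul_prod_factorial M hS, Nat.mul_factorial_pred hcard]

end Arrangements

/-- In `wt`, the binder `a` is elaborated as an integer, so that `w` itself is coerced to `List ℤ`
through the list monad. This form maps the letters directly. -/
theorem wt_eq_sum_map (w : List ℕ) : wt w = (w.map fun a : ℕ ↦ (a : ℤ) - 1).sum := by
  simp [wt, ← List.map_eq_flatMap, Function.comp_def]

theorem mem_Bset_iff {w : List ℕ} :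
    w ∈ Bset ↔ wt w = 1 ∧ StaysPositive (w.map fun a : ℕ ↦ (a : ℤ) - 1) := by
  simp only [Bset, Set.mem_ofPred_eq, StaysPositive, wt_eq_sum_map, List.length_map, List.map_take]

theorem card_Bset_arrangements_mul_prod_factorial {M : Multiset ℕ}
    (hM : (M.map fun a : ℕ ↦ (a : ℤ) - 1).sum = 1) {S : Finset ℕ} (hS : M.toFinset ⊆ S) :
    Nat.card {w : List ℕ // (w : Multiset ℕ) = M ∧ w ∈ Bset} * ∏ a ∈ S, (M.count a)! =
      (M.card - 1)! := by
  classical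
  rw [← card_filter_staysPositive_mul_prod_factorial hM hS]
  congr 1
  refine Nat.subtype_card _ fun w ↦ ?_
  rw [mem_filter, mem_arrangements, mem_Bset_iff]
  refine and_congr_right fun hw ↦ ?_
  rw [wt_eq_sum_map, ← Multiset.sum_coe, ← Multiset.map_coe, hw, hM, eq_self_iff_true, true_and]

section Content

variable {n : ℕ} (z : ℕ) (r : Fin n → ℕ)

/-- The content of the words counted by `ℬ(r)`: `z` letters `0` and `r_i` letters `i` for
`1 ≤ i ≤ n`. As `Fin n` starts at `0`, `r_i` is `r (i - 1)`. -/
def content : Multiset ℕ :=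
  Multiset.replicate z 0 + ∑ i, Multiset.replicate (r i) (i.1 + 1)

theorem count_zero_content : (content z r).count 0 = z := by
  simp [content, Multiset.count_sum', Multiset.count_replicate]

theorem count_succ_content (i : Fin n) : (content z r).count (i.1 + 1) = r i := by
  simp [content, Multiset.count_sum', Multiset.count_replicate, Fin.val_inj]

theorem card_content : (content z r).card = z + ∑ i, r i := by
  simp [content]

theorem toFinset_content_subset : (content z r).toFinset ⊆ range (n + 1) := by
  intro a ha
  simp only [content, Multiset.mem_toFinset, Multiset.mem_add, Multiset.mem_sum,
    Multiset.mem_replicate] at ha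
  rcases ha with ⟨_, rfl⟩ | ⟨i, _, _, rfl⟩ <;> simp

theorem sum_weight_content :
    ((content z r).map fun a : ℕ ↦ (a : ℤ) - 1).sum = ∑ i, (i.1 : ℤ) * r i - z := by
  have hmap := map_sum (Multiset.mapAddMonoidHom fun a : ℕ ↦ (a : ℤ) - 1)
    (fun i : Fin n ↦ Multiset.replicate (r i) (i.1 + 1)) univ
  simp only [Multiset.coe_mapAddMonoidHom] at hmap
  rw [content, Multiset.map_add, hmap, Multiset.sum_add, Multiset.sum_sum]
  simp [mul_comm, neg_add_eq_sub]

theorem prod_factorial_count_content :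
    ∏ a ∈ range (n + 1), ((content z r).count a)! = z ! * ∏ i, (r i)! := by
  rw [prod_range_succ', count_zero_content, prod_range fun a ↦ ((content z r).count (a + 1))!,
    mul_comm]
  simp only [count_succ_content]

variable {z r} in
theorem coe_eq_content_iff {w : List ℕ} :
    (w : Multiset ℕ) = content z r ↔
      w.length = z + ∑ i, r i ∧ w.count 0 = z ∧ ∀ i : Fin n, w.count (i.1 + 1) = r i := by
  constructor
  · intro h
    simp only [← Multiset.coe_card, ← Multiset.coe_count, h, card_content, count_zero_content,
      count_succ_content, implies_true, and_self]
  · rintro ⟨hlen, hzero, hsucc⟩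
    have hle : content z r ≤ w := by
      refine Multiset.le_iff_count.mpr fun a ↦ ?_
      by_cases ha : a ∈ content z r
      · have han : a < n + 1 :=
          mem_range.mp (toFinset_content_subset z r (Multiset.mem_toFinset.mpr ha))
        rw [Multiset.coe_count]
        cases a with
        | zero => rw [count_zero_content, hzero]
        | succ a =>
          let i : Fin n := ⟨a, by lia⟩
          exact (count_succ_content z r i).trans (hsucc i).symm |>.le
      · rw [Multiset.count_eq_zero_of_notMem ha]
        exact Nat.zero_le _
    refine (Multiset.eq_of_le_of_card_le hle ?_).symm
    rw [Multiset.coe_card, hlen, card_content]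

end Content

/-- Cardinality of `ℬ(r)`: the number `N` of words of length `n - 1` in `ℬ` with
`n - |r| - 1` letters `0` and `r i` letters `i` (for `1 ≤ i ≤ n`) satisfies
`N · (n - |r| - 1)! · r! = (n - 2)!`. -/
theorem card_Bset_r (n : ℕ) (hn : 1 < n) (r : Fin n → ℕ)
    (hrv : ∑ i, (i.1 + 1) * r i = n) (hr : ∑ i, r i < n) :
    Nat.card {w : List ℕ // w.length = n - 1 ∧ w ∈ Bset ∧
        w.count 0 = n - (∑ i, r i) - 1 ∧ ∀ i : Fin n, w.count (i.1 + 1) = r i} *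
      (n - (∑ i, r i) - 1).factorial * ∏ i, (r i).factorial = (n - 2).factorial := by
  set z := n - (∑ i, r i) - 1
  have hlen : z + ∑ i, r i = n - 1 := by lia
  have hsplit : ∑ i : Fin n, i.1 * r i + ∑ i, r i = n := by
    simpa only [add_one_mul, sum_add_distrib] using hrv
  have hweight : ((content z r).map fun a : ℕ ↦ (a : ℤ) - 1).sum = 1 := by
    rw [sum_weight_content, sub_eq_iff_eq_add]
    exact_mod_cast (by lia : ∑ i : Fin n, i.1 * r i = 1 + z)
  have hwords (w : List ℕ) : (w.length = n - 1 ∧ w ∈ Bset ∧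
      w.count 0 = z ∧ ∀ i : Fin n, w.count (i.1 + 1) = r i) ↔
      (w : Multiset ℕ) = content z r ∧ w ∈ Bset := by
    rw [coe_eq_content_iff, hlen]
    tauto
  rw [Nat.card_congr (Equiv.subtypeEquivRight hwords), mul_assoc, ← prod_factorial_count_content,
    card_Bset_arrangements_mul_prod_factorial hweight (toFinset_content_subset z r), card_content,
    hlen, Nat.sub_sub]
end

section
/- Let n ≥ 1 and let r = (r_1, …, r_n) ∈ ℕ^n satisfy r_1 + 2r_2 + ⋯ + n·r_n = n, and set |r| = r_1 + ⋯ + r_n. Then the number N of Dyck paths of length 2n with ascent type r satisfies N · (n − |r| + 1)! · r_1! r_2! ⋯ r_n! = n!. -/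
/-- A Dyck path of length `2n`: a list of `2n` steps (`true` = U, `false` = D) with `n` U's
and `n` D's such that every prefix has at least as many U's as D's. -/
def IsDyckPath (n : ℕ) (l : List Bool) : Prop :=
  l.length = 2 * n ∧ l.count true = n ∧ l.count false = n ∧
    ∀ k, (l.take k).count false ≤ (l.take k).count true

/-- The path `l` has ascent type `r = (r_1, …, r_n)`: for each `i`, the number of maximal
consecutive runs of U-steps of length `i` is `r_i`. -/
def HasAscentType (n : ℕ) (l : List Bool) (r : Fin n → ℕ) : Prop :=
  ∀ i : Fin n, ((l.splitOn false).map List.length).count (i.1 + 1) = r i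

/-!
A path with `n` D-steps is determined by the lengths of the `n + 1` possibly empty runs of U-steps
that its D-steps separate. A list of `n + 1` natural numbers with sum `n` comes from a Dyck path
exactly when the walk with steps `x - 1`, for `x` in the list, first goes negative at its last step.
By the cycle lemma, exactly one of the `n + 1` rotations of such a list has this property, namely
the one starting where the walk first reaches its minimum. So `N` is `1 / (n + 1)` times the number
of orderings of the multiset of run lengths, in which `i` occurs `r_i` times for `i ≥ 1` and `0`
occurs `n + 1 - |r|` times.
-/

open scoped Finset Nat

section Orderings

variable {α : Type*} [DecidableEq α] {s : Multiset α}

/-- The lists whose underlying multiset is `s`, each occurring once (`Multiset.lists` repeats a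
list when `s` has repeated elements). -/
def orderings (s : Multiset α) : Finset (List α) :=
  s.lists.toFinset

theorem mem_orderings {l : List α} : l ∈ orderings s ↔ (l : Multiset α) = s := by
  simp [orderings, Multiset.mem_lists_iff, eq_comm]

theorem orderings_zero : orderings (0 : Multiset α) = {[]} := by
  ext l
  simp [mem_orderings]

theorem card_orderings_eq_sum_erase (hs : s ≠ 0) :
    #(orderings s) = ∑ a ∈ s.toFinset, #(orderings (s.erase a)) := by
  have orderings_eq : orderings s =
      s.toFinset.biUnion fun a ↦ (orderings (s.erase a)).image (List.cons a) := by
    ext l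
    simp only [Finset.mem_biUnion, Finset.mem_image, mem_orderings, Multiset.mem_toFinset]
    constructor
    · rintro rfl
      cases l with
      | nil => exact absurd rfl hs
      | cons a t => exact ⟨a, by simp, t, by simp, rfl⟩
    · rintro ⟨a, ha, t, ht, rfl⟩
      rw [← Multiset.cons_coe, ht, Multiset.cons_erase ha]
  rw [orderings_eq, Finset.card_biUnion]
  · exact Finset.sum_congr rfl fun a _ ↦ Finset.card_image_of_injective _ List.cons_injective
  · intro a _ b _ hab
    simp only [Function.onFun, Finset.disjoint_left, Finset.mem_image]
    rintro _ ⟨t, _, rfl⟩ ⟨u, _, hu⟩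
    exact hab (List.head_eq_of_cons_eq hu).symm

theorem count_mul_prod_factorial_count_erase {S : Finset α} {a : α} (haS : a ∈ S) (ha : a ∈ s) :
    s.count a * ∏ b ∈ S, ((s.erase a).count b)! = ∏ b ∈ S, (s.count b)! := by
  have prod_erase : ∏ b ∈ S.erase a, ((s.erase a).count b)! = ∏ b ∈ S.erase a, (s.count b)! :=
    Finset.prod_congr rfl fun b hb ↦ by rw [Multiset.count_erase_of_ne (Finset.ne_of_mem_erase hb)]
  rw [← Finset.mul_prod_erase S _ haS, ← Finset.mul_prod_erase S (fun b ↦ (s.count b)!) haS,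
    prod_erase, Multiset.count_erase_self, ← mul_assoc,
    Nat.mul_factorial_pred (Multiset.count_ne_zero.2 ha)]

theorem card_orderings_mul_prod_factorial_count {S : Finset α} (hS : s.toFinset ⊆ S) :
    #(orderings s) * ∏ b ∈ S, (s.count b)! = (s.card)! := by
  induction hm : s.card generalizing s with
  | zero =>
    obtain rfl := Multiset.card_eq_zero.1 hm
    simp [orderings_zero]
  | succ m ih =>
    have hs : s ≠ 0 := Multiset.card_pos.1 (by omega)
    have summand : ∀ a ∈ s.toFinset,
        #(orderings (s.erase a)) * ∏ b ∈ S, (s.count b)! = s.count a * m ! := by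
      intro a haF
      have ha := Multiset.mem_toFinset.1 haF
      have erase_subset : (s.erase a).toFinset ⊆ S :=
        (Multiset.toFinset_subset.2 (Multiset.erase_subset a s)).trans hS
      have card_erase : (s.erase a).card = m := by
        rw [Multiset.card_erase_of_mem ha, hm, Nat.pred_succ]
      rw [← count_mul_prod_factorial_count_erase (hS haF) ha, mul_left_comm,
        ih erase_subset card_erase]
    rw [card_orderings_eq_sum_erase hs, Finset.sum_mul, Finset.sum_congr rfl summand,
      ← Finset.sum_mul, Multiset.toFinset_sum_count_eq, hm, Nat.factorial_succ]

end Orderings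

section CycleLemma

variable {G : Type*} [AddCommGroup G]

theorem sum_take_rotate_of_add_le_s6 {a : List G} {m k : ℕ} (h : m + k ≤ a.length) :
    ((a.rotate m).take k).sum = (a.take (m + k)).sum - (a.take m).sum := by
  rw [List.rotate_eq_drop_append_take (by omega), List.take_append_of_le_length (by simp; omega),
    List.take_add, List.sum_append, add_sub_cancel_left]

theorem sum_take_rotate_of_le_add_s6 {a : List G} {m k : ℕ}
    (hm : m ≤ a.length) (hk : k ≤ a.length) (h : a.length ≤ m + k) :
    ((a.rotate m).take k).sum = a.sum - (a.take m).sum + (a.take (m + k - a.length)).sum := by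
  have sum_drop : (a.drop m).sum = a.sum - (a.take m).sum :=
    eq_sub_of_add_eq' (List.sum_take_add_sum_drop a m)
  rw [List.rotate_eq_drop_append_take hm, List.take_append, List.sum_append,
    List.take_of_length_le (by simp; omega), sum_drop, List.length_drop, List.take_take,
    show min (k - (a.length - m)) m = m + k - a.length by omega]

/-- Step sequences of (generalised) Łukasiewicz paths: the path ends at height `-1` and stays
nonnegative before its last step. -/
def IsLukasiewicz (a : List ℤ) : Prop :=
  a.sum = -1 ∧ ∀ k < a.length, 0 ≤ (a.take k).sum

instance : DecidablePred IsLukasiewicz := fun a ↦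
  inferInstanceAs (Decidable (a.sum = -1 ∧ ∀ k < a.length, 0 ≤ (a.take k).sum))

/-- The lexicographic order expresses that `m` is the first position of minimal height. -/
theorem isLukasiewicz_rotate_iff {a : List ℤ} (ha : a.sum = -1) {m : ℕ} (hm : m < a.length) :
    IsLukasiewicz (a.rotate m) ↔
      ∀ j < a.length, toLex ((a.take m).sum, m) ≤ toLex ((a.take j).sum, j) := by
  simp only [IsLukasiewicz, (List.rotate_perm a m).sum_eq, ha, true_and, List.length_rotate,
    Prod.Lex.toLex_le_toLex]
  constructor
  · intro h j hj
    rcases lt_or_ge j m with hjm | hmj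
    · have := h (a.length - m + j) (by omega)
      rw [sum_take_rotate_of_le_add_s6 hm.le (by omega) (by omega), ha,
        show m + (a.length - m + j) - a.length = j by omega] at this
      omega
    · have := h (j - m) (by omega)
      rw [sum_take_rotate_of_add_le_s6 (by omega), Nat.add_sub_cancel' hmj] at this
      omega
  · intro h k hk
    rcases lt_or_ge (m + k) a.length with hmk | hmk
    · have := h (m + k) hmk
      rw [sum_take_rotate_of_add_le_s6 hmk.le]
      omega
    · have := h (m + k - a.length) (by omega)
      rw [sum_take_rotate_of_le_add_s6 hm.le hk.le hmk, ha]
      omega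

theorem existsUnique_isLukasiewicz_rotate {a : List ℤ} (ha : a.sum = -1) :
    ∃! m, m < a.length ∧ IsLukasiewicz (a.rotate m) := by
  have length_pos : 0 < a.length := List.length_pos_iff.2 (by rintro rfl; simp at ha)
  obtain ⟨m, hm, min⟩ := Finset.exists_min_image (Finset.range a.length)
    (fun k ↦ toLex ((a.take k).sum, k)) ⟨0, Finset.mem_range.2 length_pos⟩
  simp only [Finset.mem_range] at hm min
  refine ⟨m, ⟨hm, (isLukasiewicz_rotate_iff ha hm).2 min⟩, ?_⟩
  rintro m' ⟨hm', luk⟩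
  have min' := (isLukasiewicz_rotate_iff ha hm').1 luk
  exact congrArg (fun p ↦ (ofLex p).2) (le_antisymm (min' m hm) (min m' hm'))

variable {α : Type*} [DecidableEq α] {s : Multiset α}

theorem card_filter_orderings_rotate (p : List α → Prop) [DecidablePred p] (m : ℕ) :
    #{l ∈ orderings s | p (l.rotate m)} = #{l ∈ orderings s | p l} := by
  have rotate_mem_orderings (l : List α) : l.rotate m ∈ orderings s ↔ l ∈ orderings s := by
    rw [mem_orderings, mem_orderings, Multiset.coe_eq_coe.2 (List.rotate_perm l m)]
  refine Finset.card_bij (fun l _ ↦ l.rotate m) ?_ (fun _ _ _ _ h ↦ List.rotate_injective m h) ?_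
  · simp [rotate_mem_orderings]
  · intro l hl
    obtain ⟨l, rfl⟩ : ∃ u : List α, u.rotate m = l := ⟨_, List.rotate_eq_iff.2 rfl⟩
    exact ⟨l, by simpa [rotate_mem_orderings] using hl, rfl⟩

theorem card_isLukasiewicz_orderings_mul_card (w : α → ℤ) (hw : (s.map w).sum = -1) :
    #{l ∈ orderings s | IsLukasiewicz (l.map w)} * s.card = #(orderings s) := by
  have card_rotations : ∀ l ∈ orderings s,
      #{m ∈ Finset.range s.card | IsLukasiewicz ((l.rotate m).map w)} = 1 := by
    intro l hl
    obtain rfl := mem_orderings.1 hl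
    have sum_map : (l.map w).sum = -1 := by simpa using hw
    obtain ⟨m, hm, unique⟩ := existsUnique_isLukasiewicz_rotate sum_map
    refine Finset.card_eq_one.2 ⟨m, Finset.eq_singleton_iff_unique_mem.2 ⟨?_, ?_⟩⟩
    · simpa [List.map_rotate] using hm
    · intro m' hm'
      exact unique m' (by simpa [List.map_rotate] using hm')
  calc #{l ∈ orderings s | IsLukasiewicz (l.map w)} * s.card
      = ∑ m ∈ Finset.range s.card, #{l ∈ orderings s | IsLukasiewicz ((l.rotate m).map w)} := by
        simp only [card_filter_orderings_rotate fun l ↦ IsLukasiewicz (l.map w),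
          Finset.sum_const, Finset.card_range, smul_eq_mul, mul_comm]
    _ = ∑ l ∈ orderings s, #{m ∈ Finset.range s.card | IsLukasiewicz ((l.rotate m).map w)} :=
        Finset.sum_card_bipartiteAbove_eq_sum_card_bipartiteBelow
          fun m (l : List α) ↦ IsLukasiewicz ((l.rotate m).map w)
    _ = #(orderings s) := by rw [Finset.sum_congr rfl card_rotations, Finset.card_eq_sum_ones]

end CycleLemma

section AscentLengths

/-- The lengths of the maximal runs of U-steps of a path, one run (possibly empty) before each
D-step and one after the last D-step. -/
def ascentLengths (l : List Bool) : List ℕ :=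
  (l.splitOn false).map List.length

theorem ascentLengths_nil : ascentLengths [] = [0] := by
  simp [ascentLengths]

theorem ascentLengths_false_cons (l : List Bool) :
    ascentLengths (false :: l) = 0 :: ascentLengths l := by
  simp [ascentLengths, List.splitOn_cons_eq_if_modifyHead]

theorem ascentLengths_true_cons {l : List Bool} {x : ℕ} {t : List ℕ}
    (h : ascentLengths l = x :: t) : ascentLengths (true :: l) = (x + 1) :: t := by
  obtain ⟨u, us, hsplit, rfl, rfl⟩ := List.map_eq_cons_iff.1 h
  simp [ascentLengths, List.splitOn_cons_eq_if_modifyHead, hsplit]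

theorem ascentLengths_ne_nil (l : List Bool) : ascentLengths l ≠ [] := by
  simp [ascentLengths, List.splitOn_ne_nil]

theorem ascentLengths_induction {P : List Bool → List ℕ → Prop} (nil : P [] [0])
    (down : ∀ l a, P l a → P (false :: l) (0 :: a))
    (up : ∀ l x t, P l (x :: t) → P (true :: l) ((x + 1) :: t)) (l : List Bool) :
    P l (ascentLengths l) := by
  induction l with
  | nil => exact ascentLengths_nil ▸ nil
  | cons b l ih =>
    cases b with
    | false => exact ascentLengths_false_cons l ▸ down l _ ih
    | true =>
      obtain ⟨x, t, h⟩ := List.exists_cons_of_ne_nil (ascentLengths_ne_nil l)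
      exact ascentLengths_true_cons h ▸ up l x t (h ▸ ih)

theorem length_ascentLengths (l : List Bool) : (ascentLengths l).length = l.count false + 1 := by
  refine ascentLengths_induction (P := fun l a ↦ a.length = l.count false + 1) ?_ ?_ ?_ l <;> simp

theorem sum_ascentLengths (l : List Bool) : (ascentLengths l).sum = l.count true := by
  refine ascentLengths_induction (P := fun l a ↦ a.sum = l.count true) ?_ ?_ ?_ l
  · simp
  · simp
  · intro l x t h
    rw [List.count_cons_self, ← h, List.sum_cons, List.sum_cons, Nat.add_right_comm]

theorem map_replicate_ascentLengths (l : List Bool) :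
    (ascentLengths l).map (List.replicate · true) = l.splitOn false := by
  refine ascentLengths_induction
    (P := fun l a ↦ a.map (List.replicate · true) = l.splitOn false) ?_ ?_ ?_ l
  · simp
  · intro l a h
    simp [List.splitOn_cons_eq_if_modifyHead, h]
  · intro l x t h
    simp [List.splitOn_cons_eq_if_modifyHead, ← h, List.replicate_succ]

theorem ascentLengths_injective : Function.Injective ascentLengths := by
  intro l l' h
  rw [← List.intercalate_splitOn (xs := l) false, ← map_replicate_ascentLengths, h,
    map_replicate_ascentLengths, List.intercalate_splitOn]

theorem mem_range_ascentLengths {a : List ℕ} (ha : a ≠ []) : a ∈ Set.range ascentLengths := by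
  refine ⟨[false].intercalate (a.map (List.replicate · true)), ?_⟩
  rw [ascentLengths, List.splitOn_intercalate false (by simp) (by simpa using ha), List.map_map]
  simp [Function.comp_def]

/-- The height gained by a run of `x` U-steps followed by one D-step. -/
def netRise (x : ℕ) : ℤ :=
  x - 1

theorem sum_map_netRise (s : Multiset ℕ) : (s.map netRise).sum = s.sum - s.card := by
  induction s using Multiset.induction with
  | empty => simp
  | cons x s ih =>
    rw [Multiset.map_cons, Multiset.sum_cons, ih, Multiset.sum_cons, Multiset.card_cons, netRise]
    push_cast
    ring

theorem forall_count_take_false_cons_le_iff (l : List Bool) (h : ℤ) :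
    (∀ k, (((false :: l).take k).count false : ℤ) ≤ h + ((false :: l).take k).count true) ↔
      0 ≤ h ∧ ∀ k, ((l.take k).count false : ℤ) ≤ h - 1 + (l.take k).count true := by
  rw [← Nat.and_forall_add_one]
  refine and_congr (by simp) (forall_congr' fun k ↦ ?_)
  simp only [List.take_succ_cons, List.count_cons_self, Nat.cast_add, Nat.cast_one,
    List.count_cons_of_ne Bool.false_ne_true]
  omega

theorem forall_count_take_true_cons_le_iff (l : List Bool) (h : ℤ) :
    (∀ k, (((true :: l).take k).count false : ℤ) ≤ h + ((true :: l).take k).count true) ↔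
      0 ≤ h ∧ ∀ k, ((l.take k).count false : ℤ) ≤ h + 1 + (l.take k).count true := by
  rw [← Nat.and_forall_add_one]
  refine and_congr (by simp) (forall_congr' fun k ↦ ?_)
  simp only [List.take_succ_cons, List.count_cons_self, Nat.cast_add, Nat.cast_one,
    List.count_cons_of_ne Bool.false_ne_true.symm]
  omega

theorem forall_nonneg_add_sum_take_cons_iff {M : Type*} [AddMonoid M] [LE M] (x : M) (t : List M)
    (h : M) :
    (∀ k < (x :: t).length, 0 ≤ h + ((x :: t).take k).sum) ↔
      0 ≤ h ∧ ∀ k < t.length, 0 ≤ h + x + (t.take k).sum := by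
  rw [List.length_cons, Nat.forall_lt_succ_left]
  simp [add_assoc]

/-- U-steps only raise the path, so it suffices to check its height right after each D-step. -/
theorem forall_count_take_le_iff (l : List Bool) (h : ℤ) :
    (∀ k, ((l.take k).count false : ℤ) ≤ h + (l.take k).count true) ↔
      ∀ k < ((ascentLengths l).map netRise).length,
        0 ≤ h + (((ascentLengths l).map netRise).take k).sum := by
  refine ascentLengths_induction (P := fun l a ↦ ∀ h : ℤ,
    (∀ k, ((l.take k).count false : ℤ) ≤ h + (l.take k).count true) ↔
      ∀ k < (a.map netRise).length, 0 ≤ h + ((a.map netRise).take k).sum) ?_ ?_ ?_ l h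
  · simp
  · intro l a ih h
    rw [forall_count_take_false_cons_le_iff, ih, List.map_cons,
      forall_nonneg_add_sum_take_cons_iff, netRise, Nat.cast_zero, zero_sub, sub_eq_add_neg]
  · intro l x t ih h
    have netRise_succ : h + 1 + netRise x = h + netRise (x + 1) := by
      rw [netRise, netRise]
      push_cast
      ring
    rw [forall_count_take_true_cons_le_iff, ih, List.map_cons, List.map_cons,
      forall_nonneg_add_sum_take_cons_iff, forall_nonneg_add_sum_take_cons_iff, netRise_succ]
    exact and_congr_right fun h_nonneg ↦ and_iff_right (by omega)

theorem isDyckPath_iff {n : ℕ} {l : List Bool} :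
    IsDyckPath n l ↔ (ascentLengths l).length = n + 1 ∧ (ascentLengths l).sum = n ∧
      IsLukasiewicz ((ascentLengths l).map netRise) := by
  have heights := forall_count_take_le_iff l 0
  simp only [zero_add, Nat.cast_le] at heights
  have length_eq : l.count false + l.count true = l.length := List.count_not_add_count l true
  have total_rise : ((ascentLengths l).map netRise).sum = l.count true - (l.count false + 1) := by
    simpa [sum_ascentLengths, length_ascentLengths] using sum_map_netRise (ascentLengths l)
  rw [IsDyckPath, IsLukasiewicz, heights, total_rise, sum_ascentLengths,
    length_ascentLengths]
  constructor
  · rintro ⟨_, count_true, count_false, h⟩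
    exact ⟨congrArg Nat.succ count_false, count_true, by omega, h⟩
  · rintro ⟨length_runs, count_true, _, h⟩
    have count_false : l.count false = n := Nat.succ_injective length_runs
    exact ⟨by omega, count_true, count_false, h⟩

end AscentLengths

section AscentType

variable {n : ℕ} {r : Fin n → ℕ}

/-- The multiset of positive integers in which `i + 1` has multiplicity `r i`, that is, the
integer partition with `r_j` parts equal to `j`. -/
def parts (r : Fin n → ℕ) : Multiset ℕ :=
  ∑ i, Multiset.replicate (r i) (i.1 + 1)

theorem card_parts (r : Fin n → ℕ) : (parts r).card = ∑ i, r i := by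
  simp [parts]

theorem sum_parts (r : Fin n → ℕ) : (parts r).sum = ∑ i, (i.1 + 1) * r i := by
  simp [parts, Multiset.sum_sum, mul_comm]

theorem card_parts_le_sum (r : Fin n → ℕ) : (parts r).card ≤ (parts r).sum := by
  rw [card_parts, sum_parts]
  exact Finset.sum_le_sum fun i _ ↦ Nat.le_mul_of_pos_left _ i.1.succ_pos

theorem count_succ_parts (r : Fin n → ℕ) (i : Fin n) : (parts r).count (i.1 + 1) = r i := by
  simp [parts, Multiset.count_sum', Multiset.count_replicate, Fin.val_inj]

theorem exists_eq_succ_of_mem_parts {x : ℕ} (hx : x ∈ parts r) : ∃ i : Fin n, x = i.1 + 1 := by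
  obtain ⟨i, -, hi⟩ := Multiset.mem_sum.1 hx
  exact ⟨i, Multiset.eq_of_mem_replicate hi⟩

theorem parts_le_of_count_eq {s : Multiset ℕ} (h : ∀ i : Fin n, s.count (i.1 + 1) = r i) :
    parts r ≤ s := by
  refine Multiset.le_iff_count.2 fun x ↦ ?_
  by_cases hx : x ∈ parts r
  · obtain ⟨i, rfl⟩ := exists_eq_succ_of_mem_parts hx
    rw [count_succ_parts, h]
  · simp [Multiset.count_eq_zero_of_notMem hx]

/-- The ascent lengths, empty ascents included, of the Dyck paths of ascent type `r`: such a path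
has `n + 1` ascents, of which `n + 1 - |r|` are empty. -/
def ascentMultiset (r : Fin n → ℕ) : Multiset ℕ :=
  Multiset.replicate (n + 1 - ∑ i, r i) 0 + parts r

theorem card_ascentMultiset (hr : (parts r).sum = n) : (ascentMultiset r).card = n + 1 := by
  have := card_parts_le_sum r
  rw [hr] at this
  rw [ascentMultiset, Multiset.card_add, Multiset.card_replicate, ← card_parts]
  omega

theorem sum_ascentMultiset (r : Fin n → ℕ) : (ascentMultiset r).sum = (parts r).sum := by
  simp [ascentMultiset]

theorem count_zero_ascentMultiset (r : Fin n → ℕ) :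
    (ascentMultiset r).count 0 = n + 1 - ∑ i, r i := by
  have zero_notMem : 0 ∉ parts r := fun h ↦ by simpa using exists_eq_succ_of_mem_parts h
  simp [ascentMultiset, zero_notMem]

theorem count_succ_ascentMultiset (r : Fin n → ℕ) (i : Fin n) :
    (ascentMultiset r).count (i.1 + 1) = r i := by
  simp [ascentMultiset, Multiset.count_replicate, count_succ_parts]

theorem toFinset_ascentMultiset_subset (r : Fin n → ℕ) :
    (ascentMultiset r).toFinset ⊆ Finset.range (n + 1) := by
  intro x hx
  rcases Multiset.mem_add.1 (Multiset.mem_toFinset.1 hx) with hx | hx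
  · simp [Multiset.eq_of_mem_replicate hx]
  · obtain ⟨i, rfl⟩ := exists_eq_succ_of_mem_parts hx
    simp

theorem prod_factorial_count_ascentMultiset (r : Fin n → ℕ) :
    ∏ b ∈ Finset.range (n + 1), ((ascentMultiset r).count b)! =
      (n + 1 - ∑ i, r i)! * ∏ i, (r i)! := by
  rw [Finset.prod_range_succ', count_zero_ascentMultiset,
    ← Fin.prod_univ_eq_prod_range (fun i ↦ ((ascentMultiset r).count (i + 1))!) n, mul_comm]
  simp only [count_succ_ascentMultiset]

theorem eq_ascentMultiset_iff (hr : (parts r).sum = n) {s : Multiset ℕ} :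
    s = ascentMultiset r ↔ s.card = n + 1 ∧ s.sum = n ∧ ∀ i : Fin n, s.count (i.1 + 1) = r i := by
  constructor
  · rintro rfl
    exact ⟨card_ascentMultiset hr, (sum_ascentMultiset r).trans hr, count_succ_ascentMultiset r⟩
  · rintro ⟨card_eq, sum_eq, count_eq⟩
    obtain ⟨t, rfl⟩ := Multiset.le_iff_exists_add.1 (parts_le_of_count_eq count_eq)
    rw [Multiset.sum_add, hr, Nat.add_eq_left, Multiset.sum_eq_zero_iff] at sum_eq
    rw [Multiset.card_add, card_parts] at card_eq
    rw [Multiset.eq_replicate_card.2 sum_eq, ascentMultiset, add_comm,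
      show t.card = n + 1 - ∑ i, r i by omega]

theorem card_isDyckPath_hasAscentType (hr : (parts r).sum = n) :
    Nat.card {l : List Bool // IsDyckPath n l ∧ HasAscentType n l r} =
      #{a ∈ orderings (ascentMultiset r) | IsLukasiewicz (a.map netRise)} := by
  set A := {a ∈ orderings (ascentMultiset r) | IsLukasiewicz (a.map netRise)} with hA
  have mem_iff (l : List Bool) : IsDyckPath n l ∧ HasAscentType n l r ↔ ascentLengths l ∈ A := by
    have hasAscentType_iff : HasAscentType n l r ↔
        ∀ i : Fin n, (ascentLengths l).count (i.1 + 1) = r i := Iff.rfl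
    rw [hA, Finset.mem_filter, mem_orderings, eq_ascentMultiset_iff hr, isDyckPath_iff,
      hasAscentType_iff, Multiset.coe_card, Multiset.sum_coe]
    simp only [Multiset.coe_count]
    tauto
  have subset_range : (A : Set (List ℕ)) ⊆ Set.range ascentLengths := by
    intro a ha
    refine mem_range_ascentLengths ?_
    rintro rfl
    have := (Finset.mem_filter.1 ha).2
    simp [IsLukasiewicz] at this
  calc Nat.card {l : List Bool // IsDyckPath n l ∧ HasAscentType n l r}
      = Nat.card (ascentLengths ⁻¹' A) :=
        Nat.card_congr (Equiv.subtypeEquivRight mem_iff)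
    _ = Nat.card A := Nat.card_preimage_of_injective ascentLengths_injective subset_range
    _ = #A := Nat.card_eq_finsetCard A

end AscentType

/-- The number `N` of Dyck paths of length `2n` with ascent type `r` satisfies
`N · (n - |r| + 1)! · r! = n!`. -/
theorem card_dyck_of_ascent_type (n : ℕ) (hn : 1 ≤ n) (r : Fin n → ℕ)
    (hrv : ∑ i, (i.1 + 1) * r i = n) :
    Nat.card {l : List Bool // IsDyckPath n l ∧ HasAscentType n l r} *
      (n - (∑ i, r i) + 1).factorial * ∏ i, (r i).factorial = n.factorial := by
  have hr : (parts r).sum = n := (sum_parts r).trans hrv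
  have card_le : ∑ i, r i ≤ n := by simpa only [card_parts, hr] using card_parts_le_sum r
  have total_rise : ((ascentMultiset r).map netRise).sum = -1 := by
    rw [sum_map_netRise, sum_ascentMultiset, hr, card_ascentMultiset hr]
    push_cast
    ring
  rw [card_isDyckPath_hasAscentType hr, ← Nat.sub_add_comm card_le]
  set L := {a ∈ orderings (ascentMultiset r) | IsLukasiewicz (a.map netRise)}
  have cycle_lemma : #L * (n + 1) = #(orderings (ascentMultiset r)) := by
    rw [← card_isLukasiewicz_orderings_mul_card netRise total_rise, card_ascentMultiset hr]
  apply Nat.eq_of_mul_eq_mul_left n.succ_pos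
  calc (n + 1) * (#L * (n + 1 - ∑ i, r i)! * ∏ i, (r i)!)
      = #L * (n + 1) * ((n + 1 - ∑ i, r i)! * ∏ i, (r i)!) := by ring
    _ = #(orderings (ascentMultiset r)) *
          ∏ b ∈ Finset.range (n + 1), ((ascentMultiset r).count b)! := by
        rw [cycle_lemma, prod_factorial_count_ascentMultiset]
    _ = (n + 1)! := by
        rw [card_orderings_mul_prod_factorial_count (toFinset_ascentMultiset_subset r),
          card_ascentMultiset hr]
    _ = (n + 1) * n ! := Nat.factorial_succ n
end

section
/- Let n > 1 and let r = (r_1, …, r_n) ∈ ℕ^n satisfy r_1 + 2r_2 + ⋯ + n·r_n = n and |r| := r_1 + ⋯ + r_n < n. Then the number N of connected noncrossing set partitions of [n] of type r satisfies N · (n − |r| − 1)! · r_1! r_2! ⋯ r_n! = (n − 2)!. -/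
/-- A set partition of `[n] = {1, …, n}`, encoded as a `Finpartition` of `Finset.Icc 1 n`. -/
abbrev SetPartitionOn (n : ℕ) := Finpartition (Finset.Icc 1 n)

/-- `π` has type `r = (r_1, …, r_n)` if for each `i` the number of blocks of size `i` is `r_i`. -/
def HasType {n : ℕ} (π : SetPartitionOn n) (r : Fin n → ℕ) : Prop :=
  ∀ i : Fin n, (π.parts.filter (fun B => B.card = i.1 + 1)).card = r i

/-- `π` is noncrossing: there are no `a < b < c < d` with `a, c` in one block and
`b, d` in a different block. -/
def Noncrossing {n : ℕ} (π : SetPartitionOn n) : Prop :=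
  ¬ ∃ a b c d : ℕ, a < b ∧ b < c ∧ c < d ∧
      ∃ B ∈ π.parts, ∃ B' ∈ π.parts, B ≠ B' ∧ a ∈ B ∧ c ∈ B ∧ b ∈ B' ∧ d ∈ B'

/-- `(i, j)` is an arc of `π`: `i < j` lie in a common block with no element of that
block strictly between them. -/
def IsArc {n : ℕ} (π : SetPartitionOn n) (i j : ℕ) : Prop :=
  i < j ∧ ∃ B ∈ π.parts, i ∈ B ∧ j ∈ B ∧ ∀ k ∈ B, ¬ (i < k ∧ k < j)

/-- `π` is nonnesting: there are no arcs `(a, d)` and `(b, c)` with `a < b < c < d`. -/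
def Nonnesting {n : ℕ} (π : SetPartitionOn n) : Prop :=
  ¬ ∃ a b c d : ℕ, a < b ∧ b < c ∧ c < d ∧ IsArc π a d ∧ IsArc π b c

/-- `i ∈ {1, …, n-1}` is a cut of `π` if no block contains both an element `≤ i` and an
element `> i`. -/
def IsCut {n : ℕ} (π : SetPartitionOn n) (i : ℕ) : Prop :=
  1 ≤ i ∧ i ≤ n - 1 ∧ ∀ B ∈ π.parts, (∀ x ∈ B, x ≤ i) ∨ (∀ x ∈ B, i < x)

/-- `π` is connected if it has no cuts. -/
def Connected {n : ℕ} (π : SetPartitionOn n) : Prop := ∀ i, ¬ IsCut π i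

/-- The number of cuts of `π`; `π` has exactly `m` connected components iff this is `m - 1`. -/
noncomputable def cutCount {n : ℕ} (π : SetPartitionOn n) : ℕ := Set.ncard {i : ℕ | IsCut π i}

/-!
Record a noncrossing partition of `[n]` by the word of length `n` whose letter in position `x` is
the size of the block with minimum `x`, or `0` if `x` is not a block minimum. Read a letter `c` as a
step of height `c - 1`. The height of the resulting path after `k` steps is the number of elements
`> k` lying in blocks with an element `≤ k`. It therefore stays nonnegative, ends at `0`, and
returns to `0` exactly at the cuts. Since blocks are nested, the minimum of the block of `x` can be
read off from the path, so the word determines the partition, and every such path occurs.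

For a connected partition of `[n]`, `n > 1`, the last letter is `0`. Deleting it leaves a word of
length `n - 1` with step sum `1` and positive partial sums. By the cycle lemma exactly one of the
`n - 1` rotations of any word with step sum `1` has positive partial sums, and there are
`(n - 1)! / ((n - 1 - |r|)! r_1! ⋯ r_n!)` words with the required letters.
-/

open Finset

section FiberCards

variable {α κ : Type*} [Fintype α] [DecidableEq κ]

theorem exists_comp_perm_eq_iff_card_fiber_eq (f g : α → κ) :
    (∃ σ : Equiv.Perm α, f ∘ σ = g) ↔ ∀ k, #{i | g i = k} = #{i | f i = k} := by
  constructor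
  · rintro ⟨σ, rfl⟩ k
    exact card_equiv σ (by simp)
  · intro hfg
    have fiberEquiv (k : κ) : Nonempty ({i // g i = k} ≃ {i // f i = k}) :=
      ⟨Fintype.equivOfCardEq (by simpa only [Fintype.card_subtype] using hfg k)⟩
    let e (k : κ) := (fiberEquiv k).some
    exact ⟨(Equiv.sigmaFiberEquiv g).symm.trans <|
      (Equiv.sigmaCongrRight e).trans (Equiv.sigmaFiberEquiv f),
      funext fun i ↦ (e (g i) ⟨i, rfl⟩).2⟩

variable [Fintype κ]

theorem exists_card_fiber_eq {a : κ → ℕ} (ha : ∑ k, a k = Fintype.card α) :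
    ∃ f : α → κ, ∀ k, #{i | f i = k} = a k := by
  let e : α ≃ Σ k, Fin (a k) := Fintype.equivOfCardEq (by simp [ha])
  refine ⟨fun i ↦ (e i).1, fun k ↦ ?_⟩
  calc #{i | (e i).1 = k} = #{x : Σ k, Fin (a k) | x.1 = k} := card_equiv e (by simp)
    _ = Fintype.card (Fin (a k)) := by
        rw [← Fintype.card_subtype, Fintype.card_congr (Equiv.sigmaSubtype k)]
    _ = a k := Fintype.card_fin _

theorem card_card_fiber_eq_mul_prod_factorial {a : κ → ℕ} (ha : ∑ k, a k = Fintype.card α)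
    [DecidableEq α] :
    #{f : α → κ | ∀ k, #{i | f i = k} = a k} * ∏ k, (a k).factorial =
      (Fintype.card α).factorial := by
  obtain ⟨f, hf⟩ := exists_card_fiber_eq ha
  have orbit_eq : MulAction.orbit (Equiv.Perm α)ᵈᵐᵃ f =
      {g : α → κ | ∀ k, #{i | g i = k} = a k} := by
    ext g
    simp only [← hf]
    exact (Equiv.exists_congr_left DomMulAct.mk).symm.trans
      (exists_comp_perm_eq_iff_card_fiber_eq f g)
  have card_stabilizer :
      Nat.card (MulAction.stabilizer (Equiv.Perm α)ᵈᵐᵃ f) = ∏ k, (a k).factorial := by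
    rw [Nat.card_congr MulOpposite.opEquiv,
      Nat.card_congr (DomMulAct.stabilizerMulEquiv f).toEquiv, Nat.card_pi]
    refine prod_congr rfl fun k _ ↦ ?_
    rw [Nat.card_eq_fintype_card, Fintype.card_perm, Fintype.card_subtype, hf]
  have orbit_stabilizer := (MulAction.stabilizer (Equiv.Perm α)ᵈᵐᵃ f).index_mul_card
  rw [MulAction.index_stabilizer, orbit_eq, card_stabilizer] at orbit_stabilizer
  rw [← Set.ncard_coe_finset, coe_filter_univ, orbit_stabilizer,
    Nat.card_congr DomMulAct.mk.symm, Nat.card_perm, Nat.card_eq_fintype_card]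

theorem card_fiber_eq_iff_succ {n : ℕ} {a : Fin (n + 1) → ℕ}
    (ha : ∑ k, a k = Fintype.card α) (f : α → Fin (n + 1)) :
    (∀ k, #{i | f i = k} = a k) ↔ ∀ k : Fin n, #{i | f i = k.succ} = a k.succ := by
  rw [Fin.forall_fin_succ, and_iff_right_iff_imp]
  intro hsucc
  have hcard : ∑ k, #{i | f i = k} = ∑ k, a k := by
    rw [ha, ← card_univ, card_eq_sum_card_fiberwise (f := f) (t := univ) (by simp)]
  simpa only [Fin.sum_univ_succ, hsucc, add_left_inj] using hcard

end FiberCards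

section CycleLemma

variable {m : ℕ}

theorem le_of_forall_lt_add_of_add_period {S : ℕ → ℤ} (hS : ∀ i, S (i + m) = S i + 1) {s t : ℕ}
    (hs : ∀ k ∈ Icc 1 m, S s < S (s + k)) (ht : ∀ k ∈ Icc 1 m, S t < S (t + k)) (htm : t < m) :
    t ≤ s := by
  by_contra! hst
  have hlt : S s < S t := by
    simpa [Nat.add_sub_cancel' hst.le] using hs (t - s) (mem_Icc.2 (by omega))
  have hle : S t < S s + 1 := by
    simpa [Nat.add_sub_cancel' (show t ≤ s + m by omega), hS] using
      ht (s + m - t) (mem_Icc.2 (by omega))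
  omega

variable [NeZero m]

theorem exists_forall_lt_add_of_add_period {S : ℕ → ℤ} (hS : ∀ i, S (i + m) = S i + 1) :
    ∃ s < m, ∀ k ∈ Icc 1 m, S s < S (s + k) := by
  obtain ⟨t, ht, hmin⟩ := exists_min_image (range m) S ⟨0, mem_range.2 (NeZero.pos m)⟩
  -- `s` is the last index in `[0, m)` at which `S` attains its minimum.
  obtain ⟨s, hs, hlast⟩ := exists_max_image {i ∈ range m | S i = S t} id ⟨t, by simpa using ht⟩
  simp only [mem_filter, mem_range, id] at hmin hs hlast
  refine ⟨s, hs.1, fun k hk ↦ ?_⟩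
  rw [mem_Icc] at hk
  rcases lt_or_ge (s + k) m with hlt | hge
  · have hne : S (s + k) ≠ S t := fun h ↦ by have := hlast (s + k) ⟨hlt, h⟩; omega
    exact hs.2.trans_lt ((hmin (s + k) hlt).lt_of_ne' hne)
  · have hle : S t ≤ S (s + k - m) := hmin (s + k - m) (by omega)
    have hper : S (s + k) = S (s + k - m) + 1 := by rw [← hS, Nat.sub_add_cancel hge]
    omega

open scoped Fin.CommRing

/-- All nonempty partial sums of the finite sequence `w` are positive. The cast of `l` to `Fin m` is
taken modulo `m`, but only indices `l < m` occur. -/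
def PartialSumsPos (w : Fin m → ℤ) : Prop :=
  ∀ k ∈ Icc 1 m, 0 < ∑ l ∈ range k, w (l : Fin m)

instance : DecidablePred (PartialSumsPos (m := m)) := fun w ↦ by
  unfold PartialSumsPos; infer_instance

theorem existsUnique_rotation_partialSumsPos {w : Fin m → ℤ} (hw : ∑ i, w i = 1) :
    ∃! s : Fin m, PartialSumsPos fun i ↦ w (s + i) := by
  let S (k : ℕ) : ℤ := ∑ l ∈ range k, w (l : Fin m)
  have S_add (i k : ℕ) : S (i + k) = S i + ∑ l ∈ range k, w ((i : Fin m) + (l : Fin m)) := by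
    simp only [S, sum_range_add, Nat.cast_add]
  have S_period (i : ℕ) : S (i + m) = S i + 1 := by
    rw [add_comm i, S_add m i, add_comm]
    simp [S, ← hw, sum_range]
  have pos_iff (s : Fin m) :
      PartialSumsPos (fun i ↦ w (s + i)) ↔ ∀ k ∈ Icc 1 m, S s < S (s + k) := by
    simp [PartialSumsPos, S_add]
  simp only [pos_iff]
  obtain ⟨s, hsm, hs⟩ := exists_forall_lt_add_of_add_period S_period
  refine ⟨⟨s, hsm⟩, hs, fun t ht ↦ le_antisymm ?_ ?_⟩
  · exact le_of_forall_lt_add_of_add_period S_period hs ht t.2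
  · exact le_of_forall_lt_add_of_add_period S_period ht hs hsm

variable {κ : Type*}

theorem card_eq_mul_card_filter_partialSumsPos (w : κ → ℤ) {X : Finset (Fin m → κ)}
    (hrot : ∀ s : Fin m, ∀ f ∈ X, (fun i ↦ f (s + i)) ∈ X) (hsum : ∀ f ∈ X, ∑ i, w (f i) = 1) :
    #X = m * #{f ∈ X | PartialSumsPos fun i ↦ w (f i)} := by
  have one_good_rotation : ∀ f ∈ X, #{s : Fin m | PartialSumsPos fun i ↦ w (f (s + i))} = 1 :=
    fun f hf ↦ by
      simpa only [card_eq_one, singleton_iff_unique_mem, mem_filter_univ] using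
        existsUnique_rotation_partialSumsPos (hsum f hf)
  have card_good_rotation (s : Fin m) :
      #{f ∈ X | PartialSumsPos fun i ↦ w (f (s + i))} =
        #{f ∈ X | PartialSumsPos fun i ↦ w (f i)} := by
    refine card_nbij' (fun f i ↦ f (s + i)) (fun f i ↦ f (-s + i)) (fun f hf ↦ ?_)
      (fun f hf ↦ ?_) (fun f _ ↦ by simp) (fun f _ ↦ by simp)
    · rw [mem_coe, mem_filter] at hf ⊢
      exact ⟨hrot s f hf.1, hf.2⟩
    · rw [mem_coe, mem_filter] at hf ⊢
      exact ⟨hrot (-s) f hf.1, by simpa only [neg_add_cancel_left] using hf.2⟩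
  calc #X = #X * 1 := (mul_one _).symm
    _ = #(univ : Finset (Fin m)) * #{f ∈ X | PartialSumsPos fun i ↦ w (f i)} :=
        card_mul_eq_card_mul (fun (f : Fin m → κ) (s : Fin m) ↦
          PartialSumsPos fun i ↦ w (f (s + i))) one_good_rotation fun s _ ↦ card_good_rotation s
    _ = m * #{f ∈ X | PartialSumsPos fun i ↦ w (f i)} := by rw [card_univ, Fintype.card_fin]

variable [Fintype κ] [DecidableEq κ]

theorem card_partialSumsPos_mul_prod_factorial (w : κ → ℤ) {a : κ → ℕ} (ha : ∑ k, a k = m)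
    (hw : ∑ k, a k * w k = 1) :
    #{f : Fin m → κ | (∀ k, #{i | f i = k} = a k) ∧ PartialSumsPos fun i ↦ w (f i)} *
      ∏ k, (a k).factorial = (m - 1).factorial := by
  let X : Finset (Fin m → κ) := {f | ∀ k, #{i | f i = k} = a k}
  have card_X : #X * ∏ k, (a k).factorial = m.factorial := by
    simpa using card_card_fiber_eq_mul_prod_factorial (α := Fin m) (a := a) (by simpa)
  have rotate_mem (s : Fin m) (f) (hf : f ∈ X) : (fun i ↦ f (s + i)) ∈ X := by
    simp only [X, mem_filter_univ] at hf ⊢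
    simp only [← hf]
    exact fun k ↦ card_equiv (Equiv.addLeft s) (by simp)
  have sum_eq_one : ∀ f ∈ X, ∑ i, w (f i) = 1 := fun f hf ↦ by
    simp only [X, mem_filter_univ] at hf
    rw [← hw, ← sum_fiberwise' univ f w]
    simp only [sum_const, hf, nsmul_eq_mul]
  rw [card_eq_mul_card_filter_partialSumsPos w rotate_mem sum_eq_one,
    ← Nat.mul_factorial_pred (NeZero.ne m), mul_assoc, filter_filter] at card_X
  exact Nat.eq_of_mul_eq_mul_left (NeZero.pos m) card_X

end CycleLemma

section Heights

/-- The height after `k` steps of the lattice path from `0` whose `l`-th step rises by `c l - 1`,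
steps being indexed from `0`. -/
def height (c : ℕ → ℕ) (k : ℕ) : ℤ := ∑ l ∈ range k, ((c l : ℤ) - 1)

@[simp]
theorem height_zero (c : ℕ → ℕ) : height c 0 = 0 := rfl

theorem height_succ (c : ℕ → ℕ) (k : ℕ) : height c (k + 1) = height c k + ((c k : ℤ) - 1) :=
  sum_range_succ _ k

theorem height_le_height_succ_add_one (c : ℕ → ℕ) (k : ℕ) : height c k ≤ height c (k + 1) + 1 := by
  rw [height_succ]
  omega

theorem height_congr {c d : ℕ → ℕ} {k : ℕ} (h : ∀ l < k, c l = d l) : height c k = height d k :=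
  sum_congr rfl fun l hl ↦ by rw [h l (mem_range.1 hl)]

theorem eq_of_height_eq {c d : ℕ → ℕ} {n : ℕ} (h : ∀ k ≤ n, height c k = height d k) :
    ∀ l < n, c l = d l := by
  intro l hl
  have hnow := h l hl.le
  have hnext := h (l + 1) hl
  rw [height_succ, height_succ] at hnext
  omega

variable {H : ℕ → ℤ}

theorem exists_first_visit (hH : ∀ k, H k ≤ H (k + 1) + 1) {k n : ℕ} {v : ℤ} (hkn : k ≤ n)
    (hvk : v < H k) (hvn : H n ≤ v) : ∃ y ∈ Ioc k n, H y = v ∧ ∀ j ∈ Ico k y, v < H j := by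
  have hvisit : ∃ y, k ≤ y ∧ H y ≤ v := ⟨n, hkn, hvn⟩
  obtain ⟨hky, hyv⟩ := Nat.find_spec hvisit
  have habove : ∀ j ∈ Ico k (Nat.find hvisit), v < H j := fun j hj ↦ by
    rw [mem_Ico] at hj
    simpa [hj.1] using Nat.find_min hvisit hj.2
  have hk : k < Nat.find hvisit := hky.lt_of_ne fun h ↦ by rw [← h] at hyv; omega
  have hprev := habove (Nat.find hvisit - 1) (mem_Ico.2 (by omega))
  have hstep := hH (Nat.find hvisit - 1)
  rw [Nat.sub_add_cancel (by omega)] at hstep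
  exact ⟨_, mem_Ioc.2 ⟨hk, Nat.find_min' hvisit ⟨hkn, hvn⟩⟩, by omega, habove⟩

theorem card_records (hH : ∀ k, H k ≤ H (k + 1) + 1) {k n : ℕ} (hkn : k ≤ n)
    (hmin : ∀ y ≤ n, H n ≤ H y) :
    (#{y ∈ Ioc k n | ∀ j ∈ Ico k y, H y < H j} : ℤ) = H k - H n := by
  have himage : {y ∈ Ioc k n | ∀ j ∈ Ico k y, H y < H j}.image H = Ico (H n) (H k) := by
    ext v
    simp only [mem_image, mem_filter, mem_Ioc, mem_Ico]
    constructor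
    · rintro ⟨y, ⟨⟨hky, hyn⟩, hy⟩, rfl⟩
      exact ⟨hmin y hyn, hy k ⟨le_rfl, hky⟩⟩
    · rintro ⟨hnv, hvk⟩
      obtain ⟨y, hy, rfl, habove⟩ := exists_first_visit hH hkn hvk hnv
      exact ⟨y, ⟨mem_Ioc.1 hy, by simpa using habove⟩, rfl⟩
  have hinj : Set.InjOn H ({y ∈ Ioc k n | ∀ j ∈ Ico k y, H y < H j} : Finset ℕ) := by
    intro x hx y hy hxy
    simp only [mem_coe, mem_filter, mem_Ioc, mem_Ico] at hx hy
    rcases lt_trichotomy x y with hlt | heq | hlt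
    · have := hy.2 x ⟨hx.1.1.le, hlt⟩; omega
    · exact heq
    · have := hx.2 y ⟨hy.1.1.le, hlt⟩; omega
  rw [← card_image_of_injOn hinj, himage, Int.card_Ico]
  exact Int.toNat_of_nonneg (sub_nonneg.2 (hmin k hkn))

/-- The last step, among those numbered `1` to `x`, that starts at height at most `H x` (the step
numbered `j` leads from time `j - 1` to time `j`), and `0` if there is none. In the noncrossing
partition encoded by a path with heights `H`, it is the least element of the block of `x`. -/
def opener (H : ℕ → ℤ) (x : ℕ) : ℕ := Nat.findGreatest (fun j ↦ H (j - 1) ≤ H x) x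

theorem opener_le_self (H : ℕ → ℤ) (x : ℕ) : opener H x ≤ x := Nat.findGreatest_le x

theorem opener_le_iff {x k : ℕ} : opener H x ≤ k ↔ ∀ j ∈ Ico k x, H x < H j := by
  constructor
  · intro hle j hj
    rw [mem_Ico] at hj
    exact not_le.1 (Nat.findGreatest_is_greatest (Nat.lt_succ_of_le (hle.trans hj.1)) hj.2)
  · contrapose!
    intro hlt
    have hspec : H (opener H x - 1) ≤ H x := Nat.findGreatest_of_ne_zero rfl (Nat.ne_zero_of_lt hlt)
    have hle := opener_le_self H x
    exact ⟨opener H x - 1, mem_Ico.2 (by omega), hspec⟩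

theorem opener_pos {x : ℕ} (hx : 0 < x) (h : H 0 ≤ H x) : 0 < opener H x := by
  by_contra! hle
  exact (opener_le_iff.1 hle 0 (mem_Ico.2 ⟨le_rfl, hx⟩)).not_ge h

theorem opener_le_opener {x y : ℕ} (hxy : opener H x ≤ y) (hyx : y ≤ x) :
    opener H x ≤ opener H y := by
  have hrise : H x ≤ H y := hyx.eq_or_lt.elim (fun h ↦ by rw [h]) fun h ↦
    (opener_le_iff.1 hxy y (mem_Ico.2 ⟨le_rfl, h⟩)).le
  refine le_of_forall_ge fun k hk ↦ opener_le_iff.2 fun j hj ↦ ?_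
  rw [mem_Ico] at hj
  rcases lt_or_ge j y with hjy | hyj
  · exact hrise.trans_lt (opener_le_iff.1 hk j (mem_Ico.2 ⟨hj.1, hjy⟩))
  · exact opener_le_iff.1 hxy j (mem_Ico.2 ⟨hyj, hj.2⟩)

end Heights

section BlockMinima

/-- The least element of the block of `π` containing `x`; it is `0` if `x` lies in no block. -/
noncomputable def blockMin {s : Finset ℕ} (π : Finpartition s) (x : ℕ) : ℕ :=
  sInf (π.part x : Set ℕ)

section Finpartition

variable {s : Finset ℕ} {π ρ : Finpartition s} {x y : ℕ}

theorem blockMin_mem_part (hx : x ∈ s) : blockMin π x ∈ π.part x :=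
  mem_coe.1 <| Nat.sInf_mem ⟨x, mem_coe.2 (π.mem_part_self.2 hx)⟩

theorem blockMin_le_of_mem_part (h : y ∈ π.part x) : blockMin π x ≤ y :=
  Nat.sInf_le (mem_coe.2 h)

theorem blockMin_le (hx : x ∈ s) : blockMin π x ≤ x :=
  blockMin_le_of_mem_part (π.mem_part_self.2 hx)

theorem blockMin_mem (hx : x ∈ s) : blockMin π x ∈ s :=
  π.part_subset x (blockMin_mem_part hx)

theorem part_blockMin (hx : x ∈ s) : π.part (blockMin π x) = π.part x :=
  π.part_eq_of_mem (π.part_mem.2 hx) (blockMin_mem_part hx)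

theorem blockMin_blockMin (hx : x ∈ s) : blockMin π (blockMin π x) = blockMin π x := by
  rw [blockMin, part_blockMin hx, blockMin]

theorem blockMin_eq_blockMin_iff (hx : x ∈ s) (hy : y ∈ s) :
    blockMin π x = blockMin π y ↔ π.part x = π.part y := by
  refine ⟨fun h ↦ ?_, fun h ↦ by rw [blockMin, h, blockMin]⟩
  rw [← part_blockMin hx, h, part_blockMin hy]

theorem filter_blockMin_eq (hx : x ∈ s) : {y ∈ s | blockMin π y = blockMin π x} = π.part x := by
  ext y
  rw [mem_filter]
  constructor
  · rintro ⟨hy, hyx⟩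
    rwa [π.mem_part_iff_part_eq_part hy hx, ← blockMin_eq_blockMin_iff hy hx]
  · intro hyx
    have hy := π.part_subset x hyx
    rw [blockMin_eq_blockMin_iff hy hx, ← π.mem_part_iff_part_eq_part hy hx]
    exact ⟨hy, hyx⟩

theorem exists_part_eq {B : Finset ℕ} (hB : B ∈ π.parts) : ∃ x ∈ s, π.part x = B :=
  π.part_surjOn hB

theorem eq_of_blockMin_eq (h : ∀ x ∈ s, blockMin π x = blockMin ρ x) : π = ρ := by
  have part_eq (x) (hx : x ∈ s) : π.part x = ρ.part x := by
    rw [← filter_blockMin_eq hx, ← filter_blockMin_eq hx, ← h x hx]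
    exact filter_congr fun y hy ↦ by rw [h y hy]
  ext B
  constructor
  · intro hB
    obtain ⟨x, hx, rfl⟩ := exists_part_eq hB
    rw [part_eq x hx]
    exact ρ.part_mem.2 hx
  · intro hB
    obtain ⟨x, hx, rfl⟩ := exists_part_eq hB
    rw [← part_eq x hx]
    exact π.part_mem.2 hx

end Finpartition

variable {n : ℕ} {π ρ : SetPartitionOn n} {x y : ℕ}

theorem blockMin_pos (hx : x ∈ Icc 1 n) : 0 < blockMin π x := (mem_Icc.1 (blockMin_mem hx)).1

theorem Noncrossing.blockMin_le_blockMin (hπ : Noncrossing π) (hx : x ∈ Icc 1 n)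
    (hxy : blockMin π x ≤ y) (hyx : y ≤ x) : blockMin π x ≤ blockMin π y := by
  by_contra! hlt
  have hy : y ∈ Icc 1 n := by
    have := mem_Icc.1 (blockMin_mem (π := π) hx)
    have := mem_Icc.1 hx
    rw [mem_Icc]; omega
  have hne : π.part y ≠ π.part x := fun h ↦ hlt.ne ((blockMin_eq_blockMin_iff hy hx).2 h)
  have hxy' : blockMin π x ≠ y := fun h ↦ hne (by rw [← h, part_blockMin hx])
  have hyx' : y ≠ x := fun h ↦ hne (by rw [h])
  exact hπ ⟨blockMin π y, blockMin π x, y, x, hlt, hxy.lt_of_ne hxy', hyx.lt_of_ne hyx',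
    π.part y, π.part_mem.2 hy, π.part x, π.part_mem.2 hx, hne, blockMin_mem_part hy,
    π.mem_part_self.2 hy, blockMin_mem_part hx, π.mem_part_self.2 hx⟩

theorem noncrossing_of_blockMin_le_blockMin
    (h : ∀ x ∈ Icc 1 n, ∀ y, blockMin π x ≤ y → y ≤ x → blockMin π x ≤ blockMin π y) :
    Noncrossing π := by
  rintro ⟨a, b, c, d, hab, hbc, hcd, B, hB, B', hB', hne, haB, hcB, hbB', hdB'⟩
  have ha := π.subset hB haB
  have hb := π.subset hB' hbB'
  have hc := π.subset hB hcB
  have hd := π.subset hB' hdB'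
  have hac : blockMin π a = blockMin π c := by
    rw [blockMin_eq_blockMin_iff ha hc, π.part_eq_of_mem hB haB, π.part_eq_of_mem hB hcB]
  have hbd : blockMin π b = blockMin π d := by
    rw [blockMin_eq_blockMin_iff hb hd, π.part_eq_of_mem hB' hbB', π.part_eq_of_mem hB' hdB']
  have hle_a := blockMin_le (π := π) ha
  have hle_b := blockMin_le (π := π) hb
  have hcb := h c hc b (by omega) hbc.le
  have hdc := h d hd c (by omega) hcd.le
  apply hne
  rw [← π.part_eq_of_mem hB hcB, ← π.part_eq_of_mem hB' hbB', ← blockMin_eq_blockMin_iff hc hb]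
  omega

theorem exists_noncrossing_blockMin_eq {μ : ℕ → ℕ} (hpos : ∀ x ∈ Icc 1 n, 0 < μ x)
    (hle : ∀ x ∈ Icc 1 n, μ x ≤ x) (hnest : ∀ x ∈ Icc 1 n, ∀ y, μ x ≤ y → y ≤ x → μ x ≤ μ y) :
    ∃ π : SetPartitionOn n, Noncrossing π ∧ ∀ x ∈ Icc 1 n, blockMin π x = μ x := by
  classical
  let π : SetPartitionOn n := Finpartition.ofSetSetoid (Setoid.ker μ) (Icc 1 n)
  have hblockMin : ∀ x ∈ Icc 1 n, blockMin π x = μ x := by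
    intro x hx
    have mem_part_iff (y : ℕ) : y ∈ π.part x ↔ y ∈ Icc 1 n ∧ μ x = μ y := by
      rw [Finpartition.mem_part_ofSetSetoid_iff_rel]
      simp only [hx, true_and, Setoid.ker_def]
    have hμx : μ x ∈ Icc 1 n := mem_Icc.2 ⟨hpos x hx, (hle x hx).trans (mem_Icc.1 hx).2⟩
    refine IsLeast.csInf_eq ⟨?_, fun y hy ↦ ?_⟩
    · exact (mem_part_iff _).2 ⟨hμx, (hnest x hx _ le_rfl (hle x hx)).antisymm (hle _ hμx)⟩
    · obtain ⟨hy, hxy⟩ := (mem_part_iff y).1 hy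
      exact hxy.trans_le (hle y hy)
  refine ⟨π, noncrossing_of_blockMin_le_blockMin fun x hx y hxy hyx ↦ ?_, hblockMin⟩
  have hy : y ∈ Icc 1 n := by
    have := blockMin_pos (π := π) hx
    have := mem_Icc.1 hx
    rw [mem_Icc]; omega
  rw [hblockMin x hx] at hxy ⊢
  rw [hblockMin y hy]
  exact hnest x hx y hxy hyx

end BlockMinima

section OpeningWord

variable {n : ℕ}

/-- The letter in position `l` is the size of the block of `π` with least element `l + 1`, and `0`
if there is no such block. -/
noncomputable def openingWord (π : SetPartitionOn n) (l : ℕ) : ℕ :=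
  #{y ∈ Icc 1 n | blockMin π y = l + 1}

variable {π ρ : SetPartitionOn n} {x y k l : ℕ}

theorem openingWord_le (π : SetPartitionOn n) (l : ℕ) : openingWord π l ≤ n :=
  (card_filter_le _ _).trans_eq (by rw [Nat.card_Icc, Nat.add_sub_cancel])

theorem openingWord_blockMin (hx : x ∈ Icc 1 n) :
    openingWord π (blockMin π x - 1) = #(π.part x) := by
  rw [openingWord, Nat.sub_add_cancel (blockMin_pos hx), filter_blockMin_eq hx]

theorem blockMin_succ_of_openingWord_ne_zero (h : openingWord π l ≠ 0) :
    l + 1 ∈ Icc 1 n ∧ blockMin π (l + 1) = l + 1 := by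
  obtain ⟨x, hx⟩ := card_ne_zero.1 h
  obtain ⟨hx, hxl⟩ := mem_filter.1 hx
  rw [← hxl]
  exact ⟨blockMin_mem hx, blockMin_blockMin hx⟩

theorem card_parts_filter_card_eq (hk : k ≠ 0) :
    #{B ∈ π.parts | #B = k} = #{l ∈ range n | openingWord π l = k} := by
  have is_min {l : ℕ} (hl : openingWord π l = k) :
      l + 1 ∈ Icc 1 n ∧ blockMin π (l + 1) = l + 1 :=
    blockMin_succ_of_openingWord_ne_zero (by rwa [hl])
  symm
  refine card_nbij (fun l ↦ π.part (l + 1)) (fun l hl ↦ ?_) (fun l hl l' hl' hpart ↦ ?_)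
    (fun B hB ↦ ?_)
  · obtain ⟨-, hl⟩ := mem_filter.1 hl
    obtain ⟨hmem, hmin⟩ := is_min hl
    have hcard := openingWord_blockMin (π := π) hmem
    rw [hmin, Nat.add_sub_cancel, hl] at hcard
    exact mem_filter.2 ⟨π.part_mem.2 hmem, hcard.symm⟩
  · obtain ⟨hmem, hmin⟩ := is_min (mem_filter.1 hl).2
    obtain ⟨hmem', hmin'⟩ := is_min (mem_filter.1 hl').2
    have := (blockMin_eq_blockMin_iff hmem hmem').2 hpart
    omega
  · obtain ⟨hB, hBk⟩ := mem_filter.1 hB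
    obtain ⟨x, hx, rfl⟩ := exists_part_eq hB
    have hpos : 0 < blockMin π x := blockMin_pos hx
    have hle : blockMin π x ≤ n := (mem_Icc.1 (blockMin_mem hx)).2
    refine ⟨blockMin π x - 1, ?_, ?_⟩
    · rw [mem_coe, mem_filter, mem_range, openingWord_blockMin hx]
      exact ⟨by omega, hBk⟩
    · simp only [Nat.sub_add_cancel hpos, part_blockMin hx]

theorem sum_range_openingWord (π : SetPartitionOn n) (k : ℕ) :
    ∑ l ∈ range k, openingWord π l = #{y ∈ Icc 1 n | blockMin π y ≤ k} := by
  rw [card_eq_sum_card_fiberwise (f := fun y ↦ blockMin π y - 1) (t := range k)]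
  · refine sum_congr rfl fun l hl ↦ ?_
    rw [openingWord, filter_filter]
    congr 1
    refine filter_congr fun y hy ↦ ?_
    have := blockMin_pos (π := π) hy
    have := mem_range.1 hl
    omega
  · intro y hy
    obtain ⟨hy, hyk⟩ := mem_filter.1 hy
    have := blockMin_pos (π := π) hy
    exact mem_coe.2 (mem_range.2 (show blockMin π y - 1 < k by omega))

theorem height_openingWord (hk : k ≤ n) :
    height (openingWord π) k = #{y ∈ Ioc k n | blockMin π y ≤ k} := by
  have hunion : {y ∈ Icc 1 n | blockMin π y ≤ k} =
      Icc 1 k ∪ {y ∈ Ioc k n | blockMin π y ≤ k} := by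
    ext y
    simp only [mem_union, mem_filter, mem_Icc, mem_Ioc]
    have hle : 1 ≤ y ∧ y ≤ n → blockMin π y ≤ y := fun hy ↦ blockMin_le (mem_Icc.2 hy)
    omega
  have hdisj : Disjoint (Icc 1 k) {y ∈ Ioc k n | blockMin π y ≤ k} :=
    disjoint_left.2 fun y hy hy' ↦ by rw [mem_filter, mem_Ioc] at hy'; rw [mem_Icc] at hy; omega
  rw [height, sum_sub_distrib, ← Nat.cast_sum, sum_range_openingWord, hunion,
    card_union_of_disjoint hdisj]
  simp

theorem Noncrossing.blockMin_le_iff (hπ : Noncrossing π) (hx : x ∈ Icc 1 n) :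
    blockMin π x ≤ k ↔
      ∀ j ∈ Ico k x, height (openingWord π) x < height (openingWord π) j := by
  have hxn := (mem_Icc.1 hx).2
  constructor
  · intro hle j hj
    rw [mem_Ico] at hj
    rw [height_openingWord hxn, height_openingWord (by omega), Nat.cast_lt]
    refine card_lt_card <| ssubset_iff_of_subset (fun y hy ↦ ?_) |>.2 ⟨x, ?_, ?_⟩
    · rw [mem_filter, mem_Ioc] at hy ⊢
      have := hπ.blockMin_le_blockMin (mem_Icc.2 (by omega)) hy.2 hy.1.1.le
      omega
    · rw [mem_filter, mem_Ioc]; omega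
    · rw [mem_filter, mem_Ioc]; omega
  · contrapose!
    intro hlt
    have hle : blockMin π x ≤ x := blockMin_le hx
    refine ⟨blockMin π x - 1, mem_Ico.2 (by omega), ?_⟩
    rw [height_openingWord hxn, height_openingWord (by omega), Nat.cast_le]
    refine card_le_card fun y hy ↦ ?_
    rw [mem_filter, mem_Ioc] at hy ⊢
    have hxy : x < y := by
      by_contra! hyx
      have := hπ.blockMin_le_blockMin hx (y := y) (by omega) hyx
      omega
    omega

theorem Noncrossing.eq_of_openingWord_eq (hπ : Noncrossing π) (hρ : Noncrossing ρ)
    (h : ∀ l < n, openingWord π l = openingWord ρ l) : π = ρ := by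
  have height_eq (k) (hk : k ≤ n) : height (openingWord π) k = height (openingWord ρ) k :=
    height_congr fun l hl ↦ h l (hl.trans_le hk)
  refine eq_of_blockMin_eq fun x hx ↦ eq_of_forall_ge_iff fun k ↦ ?_
  have hxn := (mem_Icc.1 hx).2
  rw [hπ.blockMin_le_iff hx, hρ.blockMin_le_iff hx]
  refine forall₂_congr fun j hj ↦ ?_
  rw [height_eq x hxn, height_eq j ((mem_Ico.1 hj).2.le.trans hxn)]

theorem exists_noncrossing_openingWord_eq {c : ℕ → ℕ} (hnonneg : ∀ k ≤ n, 0 ≤ height c k)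
    (hn : height c n = 0) :
    ∃ π : SetPartitionOn n, Noncrossing π ∧ ∀ l < n, openingWord π l = c l := by
  obtain ⟨π, hπ, hμ⟩ := exists_noncrossing_blockMin_eq (n := n) (μ := opener (height c))
    (fun x hx ↦ opener_pos (mem_Icc.1 hx).1 (hnonneg x (mem_Icc.1 hx).2))
    (fun x _ ↦ opener_le_self _ x) fun x _ y ↦ opener_le_opener
  refine ⟨π, hπ, eq_of_height_eq fun k hk ↦ ?_⟩
  calc height (openingWord π) k
      = #{y ∈ Ioc k n | blockMin π y ≤ k} := height_openingWord hk
    _ = #{y ∈ Ioc k n | ∀ j ∈ Ico k y, height c y < height c j} := by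
        congr 2
        refine filter_congr fun y hy ↦ ?_
        rw [hμ y (mem_Icc.2 (by rw [mem_Ioc] at hy; omega)), opener_le_iff]
    _ = height c k - height c n :=
        card_records (height_le_height_succ_add_one c) hk fun y hy ↦ hn.trans_le (hnonneg y hy)
    _ = height c k := by rw [hn, sub_zero]

theorem height_openingWord_self (π : SetPartitionOn n) : height (openingWord π) n = 0 := by
  simp [height_openingWord le_rfl]

theorem isCut_iff_height_openingWord_eq_zero (hk : k ∈ Ico 1 n) :
    IsCut π k ↔ height (openingWord π) k = 0 := by
  rw [mem_Ico] at hk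
  have height_eq_zero_iff :
      height (openingWord π) k = 0 ↔ ∀ y ∈ Ioc k n, k < blockMin π y := by
    rw [height_openingWord hk.2.le, Nat.cast_eq_zero, card_eq_zero, filter_eq_empty_iff]
    simp only [not_le]
  rw [height_eq_zero_iff]
  constructor
  · rintro ⟨-, -, hcut⟩ y hy
    rw [mem_Ioc] at hy
    have hyn : y ∈ Icc 1 n := mem_Icc.2 (by omega)
    rcases hcut _ (π.part_mem.2 hyn) with h | h
    · exact absurd (h y (π.mem_part_self.2 hyn)) hy.1.not_ge
    · exact h _ (blockMin_mem_part hyn)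
  · refine fun h ↦ ⟨hk.1, by omega, fun B hB ↦ ?_⟩
    by_contra! hsplit
    obtain ⟨⟨y, hyB, hky⟩, x, hxB, hxk⟩ := hsplit
    have hyn := mem_Icc.1 (π.subset hB hyB)
    have hlt := h y (mem_Ioc.2 ⟨hky, hyn.2⟩)
    have hle : blockMin π y ≤ x := blockMin_le_of_mem_part (by rwa [π.part_eq_of_mem hB hyB])
    omega

theorem connected_iff_height_openingWord_pos :
    Connected π ↔ ∀ k ∈ Ico 1 n, 0 < height (openingWord π) k := by
  refine ⟨fun h k hk ↦ ?_, fun h k hcut ↦ ?_⟩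
  · have hnonneg : 0 ≤ height (openingWord π) k := by
      rw [height_openingWord (mem_Ico.1 hk).2.le]
      exact Int.natCast_nonneg _
    exact hnonneg.lt_of_ne' fun h0 ↦ h k ((isCut_iff_height_openingWord_eq_zero hk).2 h0)
  · have hk : k ∈ Ico 1 n := mem_Ico.2 (by have := hcut.1; have := hcut.2.1; omega)
    exact (h k hk).ne' ((isCut_iff_height_openingWord_eq_zero hk).1 hcut)

end OpeningWord

section TruncatedWord

variable {m : ℕ}

theorem sum_val_eq_sum_succ_mul {α : Type*} [Fintype α] {N : ℕ} {r : Fin N → ℕ}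
    {f : α → Fin (N + 1)} (hf : ∀ k : Fin N, #{i | f i = k.succ} = r k) :
    ∑ i, (f i : ℕ) = ∑ k : Fin N, (k.1 + 1) * r k := by
  rw [← sum_fiberwise' univ f (fun k ↦ (k : ℕ)), Fin.sum_univ_succ]
  simp [hf, mul_comm]

theorem partialSumsPos_iff_height_pos [NeZero m] (c : ℕ → ℕ) :
    PartialSumsPos (fun i : Fin m ↦ (c i : ℤ) - 1) ↔ ∀ k ∈ Icc 1 m, 0 < height c k := by
  refine forall₂_congr fun k hk ↦ ?_
  rw [height, sum_congr rfl fun l hl ↦ ?_]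
  beta_reduce
  rw [Fin.val_cast_of_lt ((mem_range.1 hl).trans_le (mem_Icc.1 hk).2)]

/-- The opening word of `π` without its last letter, which vanishes if `π` is connected. -/
noncomputable def truncatedWord (π : SetPartitionOn (m + 1)) (i : Fin m) : Fin (m + 2) :=
  ⟨openingWord π i, Nat.lt_succ_of_le (openingWord_le π i)⟩

variable {π : SetPartitionOn (m + 1)} {r : Fin (m + 1) → ℕ}

theorem hasType_iff_of_openingWord_last_eq_zero (h : openingWord π m = 0) :
    HasType π r ↔ ∀ k : Fin (m + 1), #{i | truncatedWord π i = k.succ} = r k := by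
  refine forall_congr' fun k ↦ ?_
  rw [card_parts_filter_card_eq k.1.succ_ne_zero, range_add_one, filter_insert,
    if_neg (by rw [h]; exact k.1.succ_ne_zero.symm),
    card_filter, card_filter, sum_range]
  simp only [truncatedWord, Fin.ext_iff, Fin.val_succ]

variable [NeZero m]

theorem connected_iff_partialSumsPos :
    Connected π ↔ PartialSumsPos fun i ↦ (truncatedWord π i : ℤ) - 1 := by
  rw [connected_iff_height_openingWord_pos]
  exact (partialSumsPos_iff_height_pos (openingWord π)).symm

theorem Connected.openingWord_last_eq_zero (h : Connected π) : openingWord π m = 0 := by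
  have hpos := connected_iff_height_openingWord_pos.1 h m
    (mem_Ico.2 ⟨NeZero.one_le, m.lt_succ_self⟩)
  have hend := height_openingWord_self π
  rw [height_succ] at hend
  omega

theorem eq_of_truncatedWord_eq {ρ : SetPartitionOn (m + 1)} (hπ : Noncrossing π)
    (hρ : Noncrossing ρ) (hπc : Connected π) (hρc : Connected ρ)
    (h : truncatedWord π = truncatedWord ρ) : π = ρ := by
  refine hπ.eq_of_openingWord_eq hρ fun l hl ↦ ?_
  rcases (Nat.le_of_lt_succ hl).lt_or_eq with hlm | rfl
  · exact congrArg Fin.val (congrFun h ⟨l, hlm⟩)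
  · rw [hπc.openingWord_last_eq_zero, hρc.openingWord_last_eq_zero]

theorem exists_truncatedWord_eq {f : Fin m → Fin (m + 2)} (hsum : ∑ i, (f i : ℕ) = m + 1)
    (hf : PartialSumsPos fun i ↦ (f i : ℤ) - 1) :
    ∃ π, Noncrossing π ∧ Connected π ∧ truncatedWord π = f := by
  let c (l : ℕ) : ℕ := if h : l < m then f ⟨l, h⟩ else 0
  have c_coe (i : Fin m) : c i = f i := dif_pos i.2
  have height_pos : ∀ k ∈ Icc 1 m, 0 < height c k := by
    rw [← partialSumsPos_iff_height_pos]
    simpa only [c_coe] using hf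
  have height_end : height c (m + 1) = 0 := by
    have height_m : height c m = 1 := by
      rw [height, sum_range]
      simp only [c_coe, sum_sub_distrib, ← Nat.cast_sum, hsum]
      simp
    simp [height_succ, height_m, c]
  have height_nonneg : ∀ k ≤ m + 1, 0 ≤ height c k := by
    intro k hk
    rcases hk.lt_or_eq with hkm | rfl
    · rcases k.eq_zero_or_pos with rfl | hk0
      · rw [height_zero]
      · exact (height_pos k (mem_Icc.2 ⟨hk0, Nat.le_of_lt_succ hkm⟩)).le
    · exact height_end.ge
  obtain ⟨π, hπ, hword⟩ := exists_noncrossing_openingWord_eq height_nonneg height_end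
  have htrunc : truncatedWord π = f :=
    funext fun i ↦ Fin.ext <| (hword i (Nat.lt_succ_of_lt i.2)).trans (c_coe i)
  exact ⟨π, hπ, connected_iff_partialSumsPos.2 (htrunc ▸ hf), htrunc⟩

theorem bijOn_truncatedWord (hr : ∑ i, (i.1 + 1) * r i = m + 1) :
    Set.BijOn truncatedWord {π | Noncrossing π ∧ HasType π r ∧ Connected π}
      {f | (∀ k, #{i | f i = k.succ} = r k) ∧ PartialSumsPos fun i ↦ (f i : ℤ) - 1} := by
  refine ⟨?_, fun π hπ ρ hρ h ↦ eq_of_truncatedWord_eq hπ.1 hρ.1 hπ.2.2 hρ.2.2 h, ?_⟩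
  · rintro π ⟨-, htype, hconn⟩
    exact ⟨(hasType_iff_of_openingWord_last_eq_zero hconn.openingWord_last_eq_zero).1 htype,
      connected_iff_partialSumsPos.1 hconn⟩
  · rintro f ⟨hcount, hpos⟩
    obtain ⟨π, hπ, hconn, rfl⟩ :=
      exists_truncatedWord_eq ((sum_val_eq_sum_succ_mul hcount).trans hr) hpos
    have htype : HasType π r :=
      (hasType_iff_of_openingWord_last_eq_zero hconn.openingWord_last_eq_zero).2 hcount
    exact ⟨π, ⟨hπ, htype, hconn⟩, rfl⟩

theorem card_partialSumsPos_mul_factorial_mul_prod_factorial {N : ℕ} {r : Fin N → ℕ}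
    (hsum : ∑ k, (k.1 + 1) * r k = m + 1) (hle : ∑ k, r k ≤ m) :
    #{f : Fin m → Fin (N + 1) | (∀ k, #{i | f i = k.succ} = r k) ∧
        PartialSumsPos fun i ↦ (f i : ℤ) - 1} *
      ((m - ∑ k, r k).factorial * ∏ k, (r k).factorial) = (m - 1).factorial := by
  let a : Fin (N + 1) → ℕ := Fin.cons (m - ∑ k, r k) r
  have ha : ∑ k, a k = m := by
    simpa [a, Fin.sum_univ_succ] using Nat.sub_add_cancel hle
  have hw : ∑ k, a k * ((k : ℤ) - 1) = 1 := by
    have hsplit : ∑ k, (r k : ℤ) * k + ∑ k, (r k : ℤ) = m + 1 := by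
      rw [← sum_add_distrib]
      exact_mod_cast (sum_congr rfl fun k _ ↦ by ring).trans hsum
    calc ∑ k, a k * ((k : ℤ) - 1)
        = -((m - ∑ k, r k : ℕ) : ℤ) + ∑ k, (r k : ℤ) * k := by simp [Fin.sum_univ_succ, a]
      _ = 1 := by rw [Nat.cast_sub hle, Nat.cast_sum]; linarith
  have hcount (f : Fin m → Fin (N + 1)) :
      (∀ k, #{i | f i = k.succ} = r k) ↔ ∀ k, #{i | f i = k} = a k :=
    (card_fiber_eq_iff_succ (ha.trans (Fintype.card_fin m).symm) f).symm
  rw [← card_partialSumsPos_mul_prod_factorial (fun k : Fin (N + 1) ↦ (k : ℤ) - 1) ha hw]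
  simp only [hcount, Fin.prod_univ_succ, a, Fin.cons_zero, Fin.cons_succ]

end TruncatedWord

/-- The number `N` of connected noncrossing partitions of `[n]` of type `r` satisfies
`N · (n - |r| - 1)! · r! = (n - 2)!`. -/
theorem card_connected_noncrossing_of_type (n : ℕ) (hn : 1 < n) (r : Fin n → ℕ)
    (hrv : ∑ i, (i.1 + 1) * r i = n) (hr : ∑ i, r i < n) :
    Nat.card {π : SetPartitionOn n // Noncrossing π ∧ HasType π r ∧ Connected π} *
      (n - (∑ i, r i) - 1).factorial * ∏ i, (r i).factorial = (n - 2).factorial := by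
  obtain ⟨m, rfl⟩ := Nat.exists_eq_add_of_le' hn.le
  have : NeZero m := ⟨by omega⟩
  have hle : ∑ i, r i ≤ m := Nat.le_of_lt_succ hr
  have hexcess : m + 1 - ∑ i, r i - 1 = m - ∑ i, r i := by omega
  have hcard : Nat.card {π : SetPartitionOn (m + 1) // Noncrossing π ∧ HasType π r ∧ Connected π} =
      #{f : Fin m → Fin (m + 2) | (∀ k, #{i | f i = k.succ} = r k) ∧
        PartialSumsPos fun i ↦ (f i : ℤ) - 1} :=
    (Nat.card_congr ((bijOn_truncatedWord hrv).equiv _)).trans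
      (Nat.subtype_card _ fun f ↦ mem_filter_univ f)
  rw [hcard, hexcess, mul_assoc]
  exact card_partialSumsPos_mul_factorial_mul_prod_factorial hrv hle
end
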